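/- In a finite simple graph of arboricity α, the number of edges {u,v} such that both deg(u) ≥ d and deg(v) ≥ d is at most 2·m·α / d for any d > 0. -/

import Mathlib

/-- The minimum of the degrees of the two endpoints of an edge. -/
def minDeg {V : Type*} [Fintype V] (G : SimpleGraph V) [DecidableRel G.Adj]
    (e : Sym2 V) : ℕ :=
  Sym2.lift ⟨fun u v => min (G.degree u) (G.degree v), fun _ _ => min_comm _ _⟩ e

/-!
Let `S` be the set of vertices of degree at least `d`. The heavy edges are exactly the edges of the
graph induced on `S`, and each of the `α` forests has at most `|S|` edges there, so there are at
most `α |S|` of them. On the other hand `d |S| ≤ 2 m` because the degrees sum to `2 m`. Counting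
inside `S` gives the bound without passing through the Chiba–Nishizeki sum.
-/

section

open Finset

variable {V ι K : Type*} {G : SimpleGraph V}

theorem card_edgeFinset_le_card_of_isAcyclic [Fintype V] [Fintype G.edgeSet] (hG : G.IsAcyclic) :
    #G.edgeFinset ≤ Fintype.card V := by
  classical
  cases isEmpty_or_nonempty V with
  | inl _ => simp [Subsingleton.elim G ⊥]
  | inr _ =>
    obtain ⟨T, hGT, -, hT⟩ :=
      SimpleGraph.connected_top.exists_isTree_le_of_le_of_isAcyclic le_top hG
    calc #G.edgeFinset ≤ #T.edgeFinset := card_le_card (SimpleGraph.edgeFinset_mono hGT)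
      _ ≤ #T.edgeFinset + 1 := Nat.le_succ _
      _ = Fintype.card V := hT.card_edgeFinset

theorem card_edgeFinset_le_of_le_iSup_isAcyclic [Fintype V] [Fintype G.edgeSet] [Fintype ι]
    {F : ι → SimpleGraph V} (hF : ∀ i, (F i).IsAcyclic) (hGF : G ≤ ⨆ i, F i) :
    #G.edgeFinset ≤ Fintype.card ι * Fintype.card V := by
  classical
  have hcover : G.edgeFinset ⊆ univ.biUnion fun i ↦ (F i).edgeFinset := by
    intro e he
    induction e with
    | _ u v => simpa using hGF (SimpleGraph.mem_edgeFinset.mp he)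
  calc #G.edgeFinset ≤ #(univ.biUnion fun i ↦ (F i).edgeFinset) := card_le_card hcover
    _ ≤ Fintype.card ι * Fintype.card V :=
      card_biUnion_le_card_mul _ _ _ fun i _ ↦ card_edgeFinset_le_card_of_isAcyclic (hF i)

theorem card_edgeFinset_induce_le_of_le_iSup_isAcyclic [Fintype ι] {F : ι → SimpleGraph V}
    (hF : ∀ i, (F i).IsAcyclic) (hGF : G ≤ ⨆ i, F i) (S : Finset V)
    [Fintype (G.induce (S : Set V)).edgeSet] :
    #(G.induce (S : Set V)).edgeFinset ≤ Fintype.card ι * #S := by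
  have hinduce : G.induce (S : Set V) ≤ ⨆ i, (F i).induce (S : Set V) := by
    intro u v huv
    simpa using hGF huv
  simpa using
    card_edgeFinset_le_of_le_iSup_isAcyclic (fun i ↦ (hF i).induce (S : Set V)) hinduce

variable [Fintype V] [DecidableRel G.Adj]

theorem card_le_degree_mul_le_two_mul_card_edgeFinset [Semiring K] [LinearOrder K]
    [IsOrderedRing K] (d : K) :
    #{v | d ≤ G.degree v} * d ≤ 2 * #G.edgeFinset := by
  calc #{v | d ≤ G.degree v} * d
      = #{v | d ≤ G.degree v} • d := (nsmul_eq_mul _ _).symm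
    _ ≤ ∑ v with d ≤ G.degree v, (G.degree v : K) :=
      card_nsmul_le_sum _ _ _ fun v hv ↦ (mem_filter.mp hv).2
    _ ≤ ∑ v, (G.degree v : K) :=
      sum_le_sum_of_subset_of_nonneg (filter_subset _ _) fun v _ _ ↦ Nat.cast_nonneg _
    _ = 2 * #G.edgeFinset := by
      rw [← Nat.cast_sum, G.sum_degrees_eq_twice_card_edges, Nat.cast_mul, Nat.cast_ofNat]

theorem le_minDeg_iff [Semiring K] [LinearOrder K] [IsOrderedRing K] {d : K} {e : Sym2 V} :
    d ≤ minDeg G e ↔ ∀ v ∈ e, d ≤ G.degree v := by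
  induction e with
  | _ u v => simp [minDeg, Nat.mono_cast.map_min]

theorem card_heavy_edges_eq_card_edgeFinset_induce [Semiring K] [LinearOrder K]
    [IsOrderedRing K] (d : K) :
    #{e ∈ G.edgeFinset | d ≤ minDeg G e} =
      #(G.induce (({v | d ≤ G.degree v} : Finset V) : Set V)).edgeFinset := by
  classical
  rw [← G.card_filter_edgeFinset_toFinset_subset]
  simp only [le_minDeg_iff, subset_iff, Sym2.mem_toFinset, mem_filter_univ]

theorem card_heavy_edges_le_general [Semifield K] [LinearOrder K]
    [IsStrictOrderedRing K] [Fintype ι] {F : ι → SimpleGraph V} (hF : ∀ i, (F i).IsAcyclic)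
    (hGF : G ≤ ⨆ i, F i) {d : K} (hd : 0 < d) :
    #{e ∈ G.edgeFinset | d ≤ minDeg G e} ≤ 2 * #G.edgeFinset * Fintype.card ι / d := by
  have hheavy : #{e ∈ G.edgeFinset | d ≤ minDeg G e} ≤ Fintype.card ι * #{v | d ≤ G.degree v} :=
    (card_heavy_edges_eq_card_edgeFinset_induce d).trans_le
      (card_edgeFinset_induce_le_of_le_iSup_isAcyclic hF hGF _)
  rw [le_div_iff₀ hd]
  calc (#{e ∈ G.edgeFinset | d ≤ minDeg G e} : K) * d
      ≤ (Fintype.card ι * #{v | d ≤ G.degree v}) * d := by gcongr; exact_mod_cast hheavy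
    _ = Fintype.card ι * (#{v | d ≤ G.degree v} * d) := mul_assoc _ _ _
    _ ≤ Fintype.card ι * (2 * #G.edgeFinset) := by
      gcongr _ * ?_
      exact card_le_degree_mul_le_two_mul_card_edgeFinset d
    _ = 2 * #G.edgeFinset * Fintype.card ι := mul_comm _ _

end

/-- In a graph whose edges decompose into `α` forests, for any `d > 0` the number of
edges both of whose endpoints have degree at least `d` is at most `2 * m * α / d`. -/
theorem card_heavy_edges_le
    {V : Type*} [Fintype V] [DecidableEq V] (G : SimpleGraph V) [DecidableRel G.Adj]
    (α : ℕ) (F : Fin α → SimpleGraph V)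
    (hle : ∀ i, F i ≤ G)
    (hforest : ∀ i, (F i).IsAcyclic)
    (hpart : ∀ e ∈ G.edgeSet, ∃! i, e ∈ (F i).edgeSet)
    (d : ℕ) (hd : 0 < d) :
    ((G.edgeFinset.filter (fun e => d ≤ minDeg G e)).card : ℝ) ≤
      2 * G.edgeFinset.card * α / d := by
  have hcover : G ≤ ⨆ i, F i := fun u v huv ↦ by simpa using (hpart s(u, v) huv).exists
  simpa using card_heavy_edges_le_general (K := ℝ) hforest hcover (Nat.cast_pos.mpr hd)
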